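/- Let F be a field, let n > k ≥ 1 with n + k odd, and let S be a linear map on M_{(n-1)×k}(F) such that det_{(n-1),k}(S(Y)) = det_{(n-1),k}(Y) for all (n−1)×k matrices Y over F. Define the linear map T on M_{n×k}(F) by T = L^+ ∘ S ∘ L^-. Then det_{n,k}(T(X)) = det_{n,k}(X) for all n×k matrices X over F. -/

import Mathlib

open Classical in
noncomputable def cullisDet {F : Type*} [Field F] {n k : ℕ}
    (X : Matrix (Fin n) (Fin k) F) : F :=
  ∑ f : Fin k → Fin n, if StrictMono f then
    (-1 : F) ^ (∑ j : Fin k, ((f j : ℕ) - (j : ℕ))) * (X.submatrix f id).det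
  else 0


/-- `L⁻`: subtract the last row from the others and delete it. -/
def Lminus {F : Type*} [Field F] {n k : ℕ}
    (X : Matrix (Fin n) (Fin k) F) : Matrix (Fin (n - 1)) (Fin k) F :=
  fun i j => X ⟨i, by have := i.isLt; omega⟩ j - X ⟨n - 1, by have := i.isLt; omega⟩ j


/-- `L⁺`: append a zero row at the bottom. -/
def Lplus {F : Type*} [Field F] {n k : ℕ}
    (Y : Matrix (Fin (n - 1)) (Fin k) F) : Matrix (Fin n) (Fin k) F :=
  fun i j => if h : (i : ℕ) < n - 1 then Y ⟨i, h⟩ j else 0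

/-!
Write `(X | 1)` for `X` with a column of ones appended. When `n + k` is odd,
`det_{n,k+1} (X | 1) = det_{n,k} X`; when `n + k` is even, the left-hand side vanishes. The two
cases are proved together by induction on `n`, expanding along the last row. Adding the same row
vector to every row of `X` is a column operation on `(X | 1)`, so for `n + k` odd it does not
change `det_{n,k} X`. Subtracting the last row of `X` from all rows yields `L⁺ (L⁻ X)`, and a zero
last row can be deleted without changing the Cullis determinant.
-/

section StrictMonoTuples

variable {n k : ℕ}

theorem exists_castSucc_comp_eq_of_strictMono {α : Type*} [Preorder α] {f : α → Fin (n + 1)}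
    (hf : StrictMono f) (hlast : ∀ a, f a ≠ Fin.last n) :
    ∃ g : α → Fin n, StrictMono g ∧ Fin.castSucc ∘ g = f :=
  ⟨fun a => (f a).castPred (hlast a), Fin.strictMono_castPred_comp hlast hf,
    funext fun a => Fin.castSucc_castPred (f a) (hlast a)⟩

theorem strictMono_snoc_castSucc_comp_last {g : Fin k → Fin n} (hg : StrictMono g) :
    StrictMono (Fin.snoc (Fin.castSucc ∘ g) (Fin.last n) : Fin (k + 1) → Fin (n + 1)) := by
  intro a b hab
  obtain ⟨a, rfl⟩ := a.eq_castSucc_of_ne_last (Fin.ne_last_of_lt hab)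
  induction b using Fin.lastCases with
  | last => simp [Fin.castSucc_lt_last]
  | cast b => simpa using hg (Fin.castSucc_lt_castSucc_iff.1 hab)

theorem strictMono_fin_succ_iff {f : Fin (k + 1) → Fin (n + 1)} :
    StrictMono f ↔ (∃ g : Fin (k + 1) → Fin n, StrictMono g ∧ Fin.castSucc ∘ g = f) ∨
      ∃ g : Fin k → Fin n, StrictMono g ∧ Fin.snoc (Fin.castSucc ∘ g) (Fin.last n) = f := by
  constructor
  · intro hf
    by_cases hlast : f (Fin.last k) = Fin.last n
    · have hinit : ∀ j, Fin.init f j ≠ Fin.last n := fun j =>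
        Fin.ne_last_of_lt (hf (Fin.castSucc_lt_last j))
      obtain ⟨g, hg, hgf⟩ :=
        exists_castSucc_comp_eq_of_strictMono (hf.comp Fin.strictMono_castSucc) hinit
      exact .inr ⟨g, hg, by rw [hgf, ← hlast]; exact Fin.snoc_init_self f⟩
    · refine .inl (exists_castSucc_comp_eq_of_strictMono hf fun j => ?_)
      have hj : f j ≤ f (Fin.last k) := hf.monotone (Fin.le_last j)
      exact Fin.ne_last_of_lt (hj.trans_lt (Fin.lt_last_iff_ne_last.2 hlast))
  · rintro (⟨g, hg, rfl⟩ | ⟨g, hg, rfl⟩)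
    · exact Fin.strictMono_castSucc.comp hg
    · exact strictMono_snoc_castSucc_comp_last hg

open Classical in
theorem sum_strictMono_fin_succ {M : Type*} [AddCommMonoid M]
    (φ : (Fin (k + 1) → Fin (n + 1)) → M) :
    ∑ f with StrictMono f, φ f =
      ∑ g : Fin (k + 1) → Fin n with StrictMono g, φ (Fin.castSucc ∘ g) +
        ∑ g : Fin k → Fin n with StrictMono g, φ (Fin.snoc (Fin.castSucc ∘ g) (Fin.last n)) := by
  let avoidLast (g : Fin (k + 1) → Fin n) : Fin (k + 1) → Fin (n + 1) := Fin.castSucc ∘ g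
  let endLast (g : Fin k → Fin n) : Fin (k + 1) → Fin (n + 1) :=
    Fin.snoc (Fin.castSucc ∘ g) (Fin.last n)
  have avoidLast_injective : avoidLast.Injective := (Fin.castSucc_injective n).comp_left
  have endLast_injective : endLast.Injective := fun g g' h =>
    (Fin.castSucc_injective n).comp_left (Fin.snoc_injective2 h).1
  have image_union_image : ({f | StrictMono f} : Finset (Fin (k + 1) → Fin (n + 1))) =
      ({g | StrictMono g} : Finset _).image avoidLast ∪
        ({g | StrictMono g} : Finset _).image endLast := by
    ext f
    simpa using strictMono_fin_succ_iff
  have images_disjoint : Disjoint (({g | StrictMono g} : Finset _).image avoidLast)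
      (({g | StrictMono g} : Finset _).image endLast) := by
    simp only [Finset.disjoint_left, Finset.mem_image]
    rintro _ ⟨g, -, rfl⟩ ⟨g', -, h⟩
    have : Fin.last n = (g (Fin.last k)).castSucc := by
      simpa [avoidLast, endLast] using congrFun h (Fin.last k)
    exact (Fin.castSucc_lt_last _).ne this.symm
  rw [image_union_image, Finset.sum_union images_disjoint,
    Finset.sum_image avoidLast_injective.injOn, Finset.sum_image endLast_injective.injOn]

end StrictMonoTuples

section AppendOnes

variable {R m : Type*} {k : ℕ}

/-- The matrix `(X | 1)` obtained from `X` by appending a column of ones on the right. Appending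
on the right rather than on the left makes `cullisDet_appendOnes` free of signs. -/
def appendOnes [One R] (X : Matrix m (Fin k) R) : Matrix m (Fin (k + 1)) R :=
  fun i => Fin.snoc (X i) 1

@[simp]
theorem appendOnes_castSucc [One R] (X : Matrix m (Fin k) R) (i : m) (j : Fin k) :
    appendOnes X i j.castSucc = X i j :=
  Fin.snoc_castSucc (α := fun _ => R) 1 (X i) j

@[simp]
theorem appendOnes_last [One R] (X : Matrix m (Fin k) R) (i : m) :
    appendOnes X i (Fin.last k) = 1 :=
  Fin.snoc_last (α := fun _ => R) 1 (X i)

theorem appendOnes_submatrix_castSucc [One R] {l : Type*} (X : Matrix m (Fin k) R) (r : l → m) :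
    (appendOnes X).submatrix r Fin.castSucc = X.submatrix r id := by
  ext i j
  simp

theorem appendOnes_submatrix_id [One R] {l : Type*} (X : Matrix m (Fin k) R) (r : l → m) :
    (appendOnes X).submatrix r id = appendOnes (X.submatrix r id) :=
  rfl

theorem appendOnes_submatrix_castSucc_succAbove [One R] {l : Type*}
    (X : Matrix m (Fin (k + 1)) R) (r : l → m) (j : Fin (k + 1)) :
    (appendOnes X).submatrix r j.castSucc.succAbove =
      appendOnes (X.submatrix r j.succAbove) := by
  ext i a
  induction a using Fin.lastCases with
  | last => simp
  | cast a => simp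

theorem det_appendOnes_add_replicateRow [CommRing R] (X : Matrix (Fin (k + 1)) (Fin k) R)
    (c : Fin k → R) :
    (appendOnes (X + Matrix.replicateRow _ c)).det = (appendOnes X).det := by
  rw [← Matrix.det_transpose, ← Matrix.det_transpose (appendOnes X)]
  refine Matrix.det_eq_of_forall_row_eq_smul_add_const (Fin.snoc c 0) (Fin.last k) (by simp) ?_
  intro j i
  induction j using Fin.lastCases <;> simp

end AppendOnes

section CullisDet

variable {F : Type*} [Field F] {n k : ℕ}

open Classical in
theorem cullisDet_eq_sum_strictMono (X : Matrix (Fin n) (Fin k) F) :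
    cullisDet X = ∑ f : Fin k → Fin n with StrictMono f,
      (-1) ^ (∑ j : Fin k, ((f j : ℕ) - (j : ℕ))) * (X.submatrix f id).det :=
  (Finset.sum_filter _ _).symm

theorem cullisDet_fin_zero_cols (X : Matrix (Fin n) (Fin 0) F) : cullisDet X = 1 := by
  simp [cullisDet, Subsingleton.strictMono]

theorem cullisDet_eq_zero_of_lt (hnk : n < k) (X : Matrix (Fin n) (Fin k) F) :
    cullisDet X = 0 := by
  refine Finset.sum_eq_zero fun f _ => if_neg fun hf => hnk.not_ge ?_
  simpa using Fintype.card_le_of_injective f hf.injective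

theorem det_submatrix_snoc_castSucc_comp_last {R : Type*} [CommRing R]
    (X : Matrix (Fin (n + 1)) (Fin (k + 1)) R) (g : Fin k → Fin n) :
    (X.submatrix (Fin.snoc (Fin.castSucc ∘ g) (Fin.last n)) id).det =
      ∑ j : Fin (k + 1), (-1) ^ (k + j : ℕ) * X (Fin.last n) j *
        ((X.submatrix Fin.castSucc j.succAbove).submatrix g id).det := by
  rw [Matrix.det_succ_row _ (Fin.last k)]
  refine Finset.sum_congr rfl fun j _ => ?_
  congr 2
  · simp
  · ext a b
    simp

/-- The sign of the column `j` is `(-1) ^ (n + j)`, whatever `k` is: the last row contributes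
`(-1) ^ (n - k)` as a member of the selected rows and `(-1) ^ (k + j)` in the Laplace expansion. -/
theorem cullisDet_succ_row_last (X : Matrix (Fin (n + 1)) (Fin (k + 1)) F) :
    cullisDet X = cullisDet (X.submatrix Fin.castSucc id) +
      ∑ j : Fin (k + 1), (-1) ^ (n + j : ℕ) * X (Fin.last n) j *
        cullisDet (X.submatrix Fin.castSucc j.succAbove) := by
  classical
  simp_rw [cullisDet_eq_sum_strictMono, Finset.mul_sum]
  rw [sum_strictMono_fin_succ, Finset.sum_comm (t := ({g | StrictMono g} : Finset _))]
  congr 1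
  refine Finset.sum_congr rfl fun g hg => ?_
  have hkn : k ≤ n := by
    simpa using Fintype.card_le_of_injective g (Finset.mem_filter.1 hg).2.injective
  have exponent_eq : ∑ i : Fin (k + 1),
      ((Fin.snoc (Fin.castSucc ∘ g) (Fin.last n) : Fin (k + 1) → Fin (n + 1)) i - (i : ℕ) : ℕ) =
        ∑ i : Fin k, ((g i : ℕ) - (i : ℕ)) + (n - k) := by
    simp [Fin.sum_univ_castSucc]
  have sign_eq (j : ℕ) : (-1 : F) ^ (n + j) = (-1) ^ (n - k) * (-1) ^ (k + j) := by
    rw [← pow_add, ← add_assoc, Nat.sub_add_cancel hkn]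
  rw [det_submatrix_snoc_castSucc_comp_last, Finset.mul_sum, exponent_eq, pow_add]
  refine Finset.sum_congr rfl fun j _ => ?_
  rw [sign_eq]
  ring

theorem cullisDet_appendOnes (X : Matrix (Fin n) (Fin k) F) :
    cullisDet (appendOnes X) = if Odd (n + k) then cullisDet X else 0 := by
  induction n generalizing k with
  | zero =>
    rw [cullisDet_eq_zero_of_lt k.succ_pos]
    split_ifs with hk
    · rw [cullisDet_eq_zero_of_lt (by simpa using hk.pos)]
    · rfl
  | succ n ih =>
    rw [cullisDet_succ_row_last, Fin.sum_univ_castSucc, appendOnes_submatrix_id,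
      Fin.succAbove_last, appendOnes_submatrix_castSucc, appendOnes_last, ih]
    cases k with
    | zero =>
      simp only [cullisDet_fin_zero_cols]
      rcases n.even_or_odd with hn | hn <;> simp [hn, Nat.odd_add_one, Nat.not_odd_iff_even]
    | succ k =>
      simp only [appendOnes_submatrix_castSucc_succAbove, appendOnes_castSucc, ih]
      rcases (n + k).even_or_odd with hnk | hnk
      · -- Two terms survive: the Cullis determinant of the upper rows, with opposite signs.
        have h_cols : Odd (n + (k + 1)) := hnk.add_one
        have h_both : ¬Odd (n + 1 + (k + 1)) := by grind
        simp [h_cols, h_both, Nat.not_odd_iff_even.2 hnk, h_cols.neg_one_pow]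
      · -- The surviving terms are the expansion of `cullisDet X` along its last row.
        have h_cols : Even (n + (k + 1)) := hnk.add_one
        have h_both : Odd (n + 1 + (k + 1)) := by grind
        simp [hnk, h_both, Nat.not_odd_iff_even.2 h_cols, h_cols.neg_one_pow,
          cullisDet_succ_row_last X, add_comm]

theorem cullisDet_add_replicateRow (hodd : Odd (n + k)) (X : Matrix (Fin n) (Fin k) F)
    (c : Fin k → F) : cullisDet (X + Matrix.replicateRow _ c) = cullisDet X := by
  have cullisDet_eq_appendOnes (Y : Matrix (Fin n) (Fin k) F) :
      cullisDet Y = cullisDet (appendOnes Y) := by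
    rw [cullisDet_appendOnes, if_pos hodd]
  rw [cullisDet_eq_appendOnes, cullisDet_eq_appendOnes X]
  classical
  simp_rw [cullisDet_eq_sum_strictMono]
  refine Finset.sum_congr rfl fun f _ => congrArg _ ?_
  exact det_appendOnes_add_replicateRow (X.submatrix f id) c

end CullisDet

section LplusLminus

variable {F : Type*} [Field F] {n k : ℕ}

theorem cullisDet_Lplus (hn : 0 < n) (Y : Matrix (Fin (n - 1)) (Fin k) F) :
    cullisDet (Lplus Y) = cullisDet Y := by
  obtain ⟨n, rfl⟩ := Nat.exists_eq_add_one.2 hn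
  cases k with
  | zero => rw [cullisDet_fin_zero_cols, cullisDet_fin_zero_cols]
  | succ k =>
    have top_rows : (Lplus Y).submatrix Fin.castSucc id = Y := by
      ext i j
      simp [Lplus]
    have last_row (j : Fin (k + 1)) : Lplus Y (Fin.last n) j = 0 := by
      simp [Lplus]
    simp [cullisDet_succ_row_last, top_rows, last_row]

theorem Lplus_Lminus (X : Matrix (Fin (n + 1)) (Fin k) F) :
    Lplus (Lminus X) = X + Matrix.replicateRow _ (-X (Fin.last n)) := by
  ext i j
  induction i using Fin.lastCases with
  | last => simp [Lplus]
  | cast i => simp [Lplus, Lminus, Fin.last, sub_eq_add_neg, Fin.castSucc, Fin.castAdd, Fin.castLE]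

theorem cullisDet_Lminus (hn : 0 < n) (hodd : Odd (n + k)) (X : Matrix (Fin n) (Fin k) F) :
    cullisDet (Lminus X) = cullisDet X := by
  rw [← cullisDet_Lplus hn]
  obtain ⟨n, rfl⟩ := Nat.exists_eq_add_one.2 hn
  rw [Lplus_Lminus, cullisDet_add_replicateRow hodd]

end LplusLminus

theorem stmt9_general {F : Type*} [Field F] {n k : ℕ} (hn : 0 < n) (hodd : Odd (n + k))
    (S : Matrix (Fin (n - 1)) (Fin k) F → Matrix (Fin (n - 1)) (Fin k) F)
    (hS : ∀ Y, cullisDet (S Y) = cullisDet Y) (X : Matrix (Fin n) (Fin k) F) :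
    cullisDet (Lplus (S (Lminus X))) = cullisDet X := by
  rw [cullisDet_Lplus hn, hS, cullisDet_Lminus hn hodd]

/-- Lemma 4.9: if `S` preserves `det_{(n-1),k}` with `n + k` odd, then
`T = L⁺ ∘ S ∘ L⁻` preserves `det_{n,k}`. -/
theorem stmt9 {F : Type*} [Field F] {n k : ℕ} (hk : 1 ≤ k) (hkn : k < n)
    (hodd : Odd (n + k))
    (S : Matrix (Fin (n - 1)) (Fin k) F →ₗ[F] Matrix (Fin (n - 1)) (Fin k) F)
    (hS : ∀ Y, cullisDet (S Y) = cullisDet Y)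
    (X : Matrix (Fin n) (Fin k) F) :
    cullisDet (Lplus (S (Lminus X))) = cullisDet X :=
  stmt9_general (hk.trans hkn.le) hodd S hS X
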